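/- Let S and T be semigroups, φ: S → T a semigroup homomorphism, and A ⊆ S. If A is central in S and φ(S) is piecewise syndetic in T, then φ(A) is central in T. -/

import Mathlib

/-- Product of ultrafilters on a semigroup `S` (the restriction to `βS` of the
Stone–Čech extension of the multiplication):
`A ∈ umul p q ↔ {x | {y | x * y ∈ A} ∈ q} ∈ p`. -/
def umul {S : Type*} [Semigroup S] (p q : Ultrafilter S) : Ultrafilter S :=
  p.bind fun x => q.map (x * ·)

/-- `p` is a minimal idempotent of `(βS, ·)`: `p` is idempotent and minimal for the
order `q ≤ p ↔ q·p = p·q = q` on idempotents. -/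
def IsMinimalIdempotent {S : Type*} [Semigroup S] (p : Ultrafilter S) : Prop :=
  umul p p = p ∧ ∀ q : Ultrafilter S, umul q q = q →
    umul q p = q → umul p q = q → q = p

/-- `A` is central in the semigroup `(S, ·)`: `A` belongs to some minimal idempotent
ultrafilter. -/
def Central {S : Type*} [Semigroup S] (A : Set S) : Prop :=
  ∃ p : Ultrafilter S, IsMinimalIdempotent p ∧ A ∈ p


/-- `P ⊆ T` is piecewise syndetic: there is a finite `F ⊆ T` such that for every
finite `G ⊆ T` there exists `x ∈ T` with `Gx ⊆ ⋃_{t ∈ F} t⁻¹P`. -/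
def PiecewiseSyndetic {T : Type*} [Semigroup T] (P : Set T) : Prop :=
  ∃ F : Finset T, ∀ G : Finset T, ∃ x : T, ∀ g ∈ G, ∃ t ∈ F, t * (g * x) ∈ P

/-!
A homomorphism `φ : S → T` extends to a homomorphism `βφ : βS → βT`, and an idempotent of `βS` is
minimal if and only if it lies in a minimal left ideal, i.e. in the smallest two-sided ideal
`K(βS)`. Piecewise syndeticity of `φ(S)` provides an ultrafilter `βφ w` in `K(βT)`. A minimal
idempotent `p` of `βS` has the form `s * (w * p)`, so `βφ p = βφ s * (βφ w * βφ p)` lies in the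
ideal `K(βT)` and hence is a minimal idempotent.
-/

open Filter Set

/-- `u` lies in some minimal left ideal of `M`. The encoding avoids naming the ideal: it says that
the left ideal generated by any left multiple of `u` contains `u` again. When such elements exist,
they form the smallest two-sided ideal `K(M)`. -/
def MemMinimalLeftIdeal {M : Type*} [Semigroup M] (u : M) : Prop :=
  ∀ y : M, ∃ d : M, d * (y * u) = u

namespace MemMinimalLeftIdeal

variable {M N : Type*} [Semigroup M] [Semigroup N] {u : M}

theorem mul_left (hu : MemMinimalLeftIdeal u) (a : M) : MemMinimalLeftIdeal (a * u) := by
  intro y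
  obtain ⟨d, hd⟩ := hu (y * a)
  exact ⟨a * d, by rw [mul_assoc, ← mul_assoc y, hd]⟩

theorem mul_right (hu : MemMinimalLeftIdeal u) (a : M) : MemMinimalLeftIdeal (u * a) := by
  intro y
  obtain ⟨d, hd⟩ := hu y
  exact ⟨d, by rw [← mul_assoc y, ← mul_assoc, hd]⟩

theorem map (hu : MemMinimalLeftIdeal u) (f : M →ₙ* N) {w : M}
    (hw : MemMinimalLeftIdeal (f w)) : MemMinimalLeftIdeal (f u) := by
  obtain ⟨d, hd⟩ := hu w
  rw [← hd, map_mul, map_mul]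
  exact (hw.mul_right _).mul_left _

theorem eq_of_isIdempotentElem (hu : MemMinimalLeftIdeal u) {e : M} (he : IsIdempotentElem e)
    (heu : e * u = e) (hue : u * e = e) : e = u := by
  obtain ⟨d, hd⟩ := hu e
  have hde : d * e = u := by rwa [heu] at hd
  calc e = d * e * e := by rw [hde, hue]
    _ = u := by rw [mul_assoc, he.eq, hde]

end MemMinimalLeftIdeal

section CompactRightTopologicalSemigroup

variable {M : Type*} [Semigroup M] [TopologicalSpace M] [CompactSpace M] [T2Space M]

theorem exists_minimal_range_mul_right [Nonempty M] (hcont : ∀ r : M, Continuous (· * r)) :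
    ∃ L : Set M, Minimal (· ∈ range fun r : M => range (· * r)) L := by
  obtain ⟨r₀⟩ := ‹Nonempty M›
  refine (zorn_superset_nonempty (range fun r : M => range (· * r))
    (fun c hc hchain hne => ?_) _ (mem_range_self r₀)).imp fun _ => And.right
  have hcompact (t : Set M) (ht : t ∈ c) : IsCompact t := by
    obtain ⟨r, rfl⟩ := hc ht
    exact isCompact_range (hcont r)
  have hnonempty (t : Set M) (ht : t ∈ c) : t.Nonempty := by
    obtain ⟨r, rfl⟩ := hc ht
    exact ⟨_, r, rfl⟩
  have hdirected : DirectedOn (· ⊇ ·) c := IsChain.directedOn hchain.symm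
  have : Nonempty c := hne.coe_sort
  obtain ⟨r, hr⟩ : (⋂₀ c).Nonempty :=
    IsCompact.nonempty_sInter_of_directed_nonempty_isCompact_isClosed
      hdirected hnonempty hcompact fun t ht => (hcompact t ht).isClosed
  -- `⋂₀ c` need not be principal, but it is a left ideal, so it contains `M * r`.
  refine ⟨range (· * r), ⟨r, rfl⟩, fun t ht => ?_⟩
  obtain ⟨q, rfl⟩ := hc ht
  obtain ⟨a, rfl⟩ := hr _ ht
  rintro _ ⟨x, rfl⟩
  exact ⟨x * a, mul_assoc x a q⟩

theorem exists_memMinimalLeftIdeal [Nonempty M] (hcont : ∀ r : M, Continuous (· * r)) :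
    ∃ u : M, MemMinimalLeftIdeal u := by
  obtain ⟨_, ⟨r, rfl⟩, hmin⟩ := exists_minimal_range_mul_right hcont
  refine ⟨r * r, fun y => ?_⟩
  have hsub : range (· * (y * (r * r))) ⊆ range (· * r) := by
    rintro _ ⟨x, rfl⟩
    exact ⟨x * (y * r), by simp only [mul_assoc]⟩
  exact hmin ⟨_, rfl⟩ hsub ⟨r, rfl⟩

theorem exists_isIdempotentElem_mul (hcont : ∀ r : M, Continuous (· * r)) (r : M) :
    ∃ s : M, IsIdempotentElem (s * r) := by
  obtain ⟨_, ⟨s, rfl⟩, hs⟩ := exists_idempotent_in_compact_subsemigroup hcont (range (· * r))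
    ⟨_, r, rfl⟩ (isCompact_range (hcont r)) (by
      rintro _ ⟨x, rfl⟩ _ ⟨y, rfl⟩
      exact ⟨x * r * y, mul_assoc _ _ _⟩)
  exact ⟨s, hs⟩

theorem memMinimalLeftIdeal_of_minimal_isIdempotentElem {p : M} (hp : IsIdempotentElem p)
    (hcont : ∀ r : M, Continuous (· * r))
    (hmin : ∀ q : M, IsIdempotentElem q → q * p = q → p * q = q → q = p) :
    MemMinimalLeftIdeal p := by
  intro y
  obtain ⟨s, hs⟩ := exists_isIdempotentElem_mul hcont (y * p)
  set i := s * (y * p)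
  have hip : i * p = i := by simp only [i, mul_assoc, hp.eq]
  have hpi : p * i = p := by
    apply hmin
    · rw [IsIdempotentElem, mul_assoc, ← mul_assoc i, hip, hs.eq]
    · rw [mul_assoc, hip]
    · rw [← mul_assoc, hp.eq]
  exact ⟨p * s, by rw [mul_assoc, hpi]⟩

end CompactRightTopologicalSemigroup

attribute [local instance] Ultrafilter.mul Ultrafilter.semigroup

theorem isMinimalIdempotent_iff {S : Type*} [Semigroup S] {p : Ultrafilter S} :
    IsMinimalIdempotent p ↔ IsIdempotentElem p ∧ MemMinimalLeftIdeal p :=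
  ⟨fun ⟨hp, hmin⟩ => ⟨hp, memMinimalLeftIdeal_of_minimal_isIdempotentElem hp
      Ultrafilter.continuous_mul_left hmin⟩,
    fun ⟨hp, hK⟩ => ⟨hp, fun _ => hK.eq_of_isIdempotentElem⟩⟩

/-- The extension `βS → βT` of a semigroup homomorphism `S → T`, as a homomorphism for the
multiplication of ultrafilters. -/
def ultrafilterMapMulHom {S T : Type*} [Mul S] [Mul T] (φ : S →ₙ* T) :
    Ultrafilter S →ₙ* Ultrafilter T where
  toFun p := p.map φ
  map_mul' p q := Ultrafilter.coe_inj.mp <| Filter.ext' fun P => by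
    simp [Ultrafilter.eventually_mul, eventually_map]

section PiecewiseSyndetic

variable {T : Type*} [Semigroup T] {P : Set T}

theorem PiecewiseSyndetic.exists_ultrafilter_forall_eventually (hP : PiecewiseSyndetic P) :
    ∃ F : Finset T, ∃ q : Ultrafilter T, ∀ g, ∀ᶠ z in q, ∃ t ∈ F, t * (g * z) ∈ P := by
  obtain ⟨F, hF⟩ := hP
  choose x hx using hF
  refine ⟨F, Ultrafilter.of (map x atTop), fun g => Ultrafilter.of_le _ (eventually_map.mpr ?_)⟩
  filter_upwards [eventually_ge_atTop {g}] with G hG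
  exact hx G g (Finset.singleton_subset_iff.mp hG)

theorem PiecewiseSyndetic.exists_mem_memMinimalLeftIdeal (hP : PiecewiseSyndetic P) :
    ∃ v : Ultrafilter T, P ∈ v ∧ MemMinimalLeftIdeal v := by
  obtain ⟨F, q, hq⟩ := hP.exists_ultrafilter_forall_eventually
  have : Nonempty (Ultrafilter T) := ⟨q⟩
  obtain ⟨u, hu⟩ := exists_memMinimalLeftIdeal (Ultrafilter.continuous_mul_left (M := T))
  have huq : ∀ᶠ z in (u * q : Ultrafilter T), ∃ t ∈ F, t * z ∈ P :=
    (Ultrafilter.eventually_mul u q _).mpr (Eventually.of_forall hq)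
  obtain ⟨t, -, ht⟩ := (Ultrafilter.eventually_exists_mem_iff F.finite_toSet).mp huq
  have htuq : ∀ᶠ z in (pure t * (u * q) : Ultrafilter T), z ∈ P :=
    (Ultrafilter.eventually_mul _ _ _).mpr (eventually_pure.mpr ht)
  exact ⟨pure t * (u * q), htuq, (hu.mul_right q).mul_left (pure t)⟩

end PiecewiseSyndetic

/-- If `φ : S → T` is a semigroup homomorphism, `A` is central in `S` and `φ(S)` is
piecewise syndetic in `T`, then `φ(A)` is central in `T`. -/
theorem stmt_19 {S T : Type*} [Semigroup S] [Semigroup T] (φ : S →ₙ* T)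
    (A : Set S) (hA : Central A) (hφ : PiecewiseSyndetic (Set.range φ)) :
    Central (φ '' A) := by
  obtain ⟨p, hp, hAp⟩ := hA
  obtain ⟨hidem, hK⟩ := isMinimalIdempotent_iff.mp hp
  obtain ⟨v, hv, hvK⟩ := hφ.exists_mem_memMinimalLeftIdeal
  obtain ⟨w, rfl⟩ : ∃ w : Ultrafilter S, w.map φ = v :=
    ⟨_, Ultrafilter.ofComapInfPrincipal_eq_of_map (by rwa [image_univ])⟩
  have hmap : IsMinimalIdempotent (p.map φ) := isMinimalIdempotent_iff.mpr
    ⟨hidem.map (ultrafilterMapMulHom φ), hK.map (ultrafilterMapMulHom φ) (w := w) hvK⟩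
  exact ⟨p.map φ, hmap, image_mem_map hAp⟩
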